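/- Priority monotonicity along successor paths: let x and y be canonical tokens with x ∈ P(y), x ≠ y, and x non-atomic. Then the canonical rule of x has strictly higher priority (i.e., strictly smaller index in D) than the canonical rule of y. -/

import Mathlib

/-!
Common BPE formalization preamble.

A token is a (nonempty) string over the alphabet `α`, modeled as `List α`.
A merge rule is a pair of tokens; a dictionary is an ordered list of rules
(earlier rules have strictly higher priority).
-/

namespace BPE

variable {α : Type*} [DecidableEq α]

/-- A token is a string over the alphabet (nonemptiness is imposed by hypotheses). -/
abbrev Token (α : Type*) := List α

/-- A merge rule is an ordered pair of tokens. -/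
abbrev Rule (α : Type*) := Token α × Token α

/-- A dictionary is an ordered list of merge rules; earlier = higher priority. -/
abbrev Dict (α : Type*) := List (Rule α)

/-- Apply a single merge rule to a token list, scanning left to right and replacing
each adjacent occurrence of `r.1` followed by `r.2` by the concatenated token,
resuming the scan after the newly formed token (no overlaps). -/
def applyRule (r : Rule α) : List (Token α) → List (Token α)
  | [] => []
  | [t] => [t]
  | t :: u :: rest =>
      if t = r.1 ∧ u = r.2 then (r.1 ++ r.2) :: applyRule r rest
      else t :: applyRule r (u :: rest)

/-- `φ₀(s)`: the list of single-character tokens of `s`. -/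
def phi0 (s : List α) : List (Token α) := s.map (fun c => [c])

/-- `φ_k(s)`: the token list after applying the first `k` rules of `D` to `s`. -/
def phiK (D : Dict α) (k : ℕ) (s : List α) : List (Token α) :=
  (D.take k).foldl (fun φ r => applyRule r φ) (phi0 s)

/-- The BPE tokenization `𝕋_D(s)`. -/
def tokenize (D : Dict α) (s : List α) : List (Token α) :=
  phiK D D.length s

/-- Detokenization `π`: concatenation of the tokens. -/
def detok (φ : List (Token α)) : List α := φ.flatten

/-- A dictionary is valid if all rule components are genuine (nonempty) tokens. -/
def ValidDict (D : Dict α) : Prop := ∀ r ∈ D, r.1 ≠ [] ∧ r.2 ≠ []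

/-- A token `t` is canonical if `𝕋_D(t) = [t]`. -/
def IsCanonical (D : Dict α) (t : Token α) : Prop := tokenize D t = [t]

/-- The last token `θ(s)`: last element of `𝕋_D(s)` (defaulting to `[]`). -/
def theta (D : Dict α) (s : List α) : Token α := (tokenize D s).getLastD []

/-- `j` (0-based) is the index of the canonical rule of `t`:
`φ_j(t)` has exactly two tokens and `φ_{j+1}(t) = [t]`. -/
def IsCanonicalRuleIdx (D : Dict α) (t : Token α) (j : ℕ) : Prop :=
  j < D.length ∧ (phiK D j t).length = 2 ∧ phiK D (j + 1) t = [t]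

open Classical in
/-- The (0-based) index of the canonical rule of `t` (junk value `0` if none exists). -/
noncomputable def canonIdx (D : Dict α) (t : Token α) : ℕ :=
  if h : ∃ j, IsCanonicalRuleIdx D t j then h.choose else 0

/-- Predecessor `pre(t)`: first token of the two-token stage `φ_{j-1}(t)`. -/
noncomputable def pre (D : Dict α) (t : Token α) : Token α :=
  (phiK D (canonIdx D t) t).headD []

/-- Successor `suc(t)`: second token of the two-token stage `φ_{j-1}(t)`. -/
noncomputable def suc (D : Dict α) (t : Token α) : Token α :=
  (phiK D (canonIdx D t) t).getLastD []

/-- `InPath D x a` means `a ∈ P(x)`: `a` is obtained from `x` by iterating `suc`,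
i.e. `a` lies on the ancestor path of `x` in the Successor Forest. -/
def InPath (D : Dict α) (x a : Token α) : Prop :=
  ∃ n : ℕ, (suc D)^[n] x = a

/-- `s` with the suffix `u` removed. -/
def dropSuffix (s u : List α) : List α := s.take (s.length - u.length)

/-- The Prefix Last-Token Condition of the canonical suffix token `t`
with respect to the string `s`. Atomic tokens satisfy it by definition;
a non-atomic token must satisfy Reachability and Priority dominance. -/
def PLTC (D : Dict α) (s t : Token α) : Prop :=
  t.length = 1 ∨
    (1 < t.length ∧
      InPath D (theta D (dropSuffix s (suc D t))) (pre D t) ∧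
      (theta D (dropSuffix s (suc D t)) ≠ pre D t →
        ∀ u : Token α, 1 < u.length → IsCanonical D u → suc D u = pre D t →
          InPath D (theta D (dropSuffix s (suc D t))) u →
          canonIdx D t < canonIdx D u))

/-!
Merging never crosses a boundary that survives to the end: if `φ_k(s)` splits as `P ++ S`, then
`s = uv` with `φ_k(u) = P` and `φ_k(v) = S`. Hence every token `u` of `φ_k(s)` satisfies
`φ_k(u) = [u]`. Taking for `k` the (0-based) index of the canonical rule of `t`, the token `suc t`
is already assembled before that rule is applied. A non-atomic canonical token is assembled at
stage `k` exactly when its canonical rule has index less than `k`, so the index drops strictly at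
each step of the path that ends in a non-atomic token.
-/

theorem applyRule_eq_self_of_length_le_one (r : Rule α) {φ : List (Token α)} (h : φ.length ≤ 1) :
    applyRule r φ = φ := by
  match φ, h with
  | [], _ => rfl
  | [_], _ => rfl

theorem flatten_applyRule (r : Rule α) (φ : List (Token α)) :
    (applyRule r φ).flatten = φ.flatten := by
  fun_induction applyRule r φ <;> simp_all

theorem length_le_two_mul_length_applyRule (r : Rule α) (φ : List (Token α)) :
    φ.length ≤ 2 * (applyRule r φ).length := by
  fun_induction applyRule r φ <;> grind

theorem length_eq_two_of_applyRule_eq_singleton {r : Rule α} {φ : List (Token α)} {t : Token α}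
    (h : applyRule r φ = [t]) (hφ : φ ≠ [t]) : φ.length = 2 := by
  have hle : φ.length ≤ 2 := by
    simpa only [h, List.length_singleton] using length_le_two_mul_length_applyRule r φ
  have hlt : 1 < φ.length := by
    by_contra! hshort
    exact hφ ((applyRule_eq_self_of_length_le_one r hshort).symm.trans h)
  omega

theorem exists_append_of_applyRule_eq_append {r : Rule α} {φ P S : List (Token α)}
    (h : applyRule r φ = P ++ S) :
    ∃ A B, φ = A ++ B ∧ applyRule r A = P ∧ applyRule r B = S := by
  induction φ using applyRule.induct r generalizing P with
  | case1 => exact ⟨[], [], by simp_all [applyRule]⟩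
  | case2 t =>
    cases P with
    | nil => exact ⟨[], [t], rfl, rfl, h⟩
    | cons p P => exact ⟨[t], [], by simp_all [applyRule]⟩
  | case3 t u rest hmatch ih =>
    cases P with
    | nil => exact ⟨[], t :: u :: rest, rfl, rfl, h⟩
    | cons p P =>
      rw [applyRule, if_pos hmatch, List.cons_append, List.cons.injEq] at h
      obtain ⟨A, B, rfl, rfl, hB⟩ := ih h.2
      exact ⟨t :: u :: A, B, rfl, by rw [applyRule, if_pos hmatch, h.1], hB⟩
  | case4 t u rest hmatch ih =>
    cases P with
    | nil => exact ⟨[], t :: u :: rest, rfl, rfl, h⟩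
    | cons p P =>
      rw [applyRule, if_neg hmatch, List.cons_append, List.cons.injEq] at h
      obtain ⟨A, B, hAB, rfl, hB⟩ := ih h.2
      refine ⟨t :: A, B, by rw [hAB, List.cons_append], ?_, hB⟩
      cases A with
      | nil => simp only [applyRule, h.1]
      | cons a A =>
        obtain ⟨rfl, -⟩ := List.cons.inj hAB
        rw [applyRule, if_neg hmatch, h.1]

/-- The token list obtained from `φ` by applying the rules in `R` one after the other. It extends
`phiK` to arbitrary initial token lists, so that statements about stages can be proved by induction
on the list of rules, without bounds on the stage index. -/
def applyRules (R : List (Rule α)) (φ : List (Token α)) : List (Token α) :=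
  R.foldl (fun ψ r => applyRule r ψ) φ

theorem applyRules_cons (r : Rule α) (R : List (Rule α)) (φ : List (Token α)) :
    applyRules (r :: R) φ = applyRules R (applyRule r φ) :=
  rfl

theorem applyRules_eq_self_of_length_le_one (R : List (Rule α)) {φ : List (Token α)}
    (h : φ.length ≤ 1) : applyRules R φ = φ := by
  induction R with
  | nil => rfl
  | cons r R ih => rw [applyRules_cons, applyRule_eq_self_of_length_le_one r h, ih]

theorem flatten_applyRules (R : List (Rule α)) (φ : List (Token α)) :
    (applyRules R φ).flatten = φ.flatten := by
  induction R generalizing φ with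
  | nil => rfl
  | cons r R ih => rw [applyRules_cons, ih, flatten_applyRule]

theorem exists_append_of_applyRules_eq_append {R : List (Rule α)} {φ P S : List (Token α)}
    (h : applyRules R φ = P ++ S) :
    ∃ A B, φ = A ++ B ∧ applyRules R A = P ∧ applyRules R B = S := by
  induction R generalizing φ with
  | nil => exact ⟨P, S, h, rfl, rfl⟩
  | cons r R ih =>
    obtain ⟨A', B', hAB', rfl, rfl⟩ := ih h
    obtain ⟨A, B, rfl, rfl, rfl⟩ := exists_append_of_applyRule_eq_append hAB'
    exact ⟨A, B, rfl, rfl, rfl⟩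

theorem phiK_eq_applyRules (D : Dict α) (k : ℕ) (s : List α) :
    phiK D k s = applyRules (D.take k) (phi0 s) :=
  rfl

theorem phiK_zero (D : Dict α) (s : List α) : phiK D 0 s = phi0 s :=
  rfl

theorem phiK_add (D : Dict α) (j k : ℕ) (s : List α) :
    phiK D (j + k) s = applyRules ((D.drop j).take k) (phiK D j s) := by
  simp only [phiK, applyRules, List.take_add, List.foldl_append]

theorem phiK_succ (D : Dict α) {k : ℕ} (hk : k < D.length) (s : List α) :
    phiK D (k + 1) s = applyRule D[k] (phiK D k s) := by
  rw [phiK_add, List.drop_eq_getElem_cons hk]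
  rfl

theorem phiK_of_length_le (D : Dict α) {k : ℕ} (hk : D.length ≤ k) (s : List α) :
    phiK D k s = tokenize D s := by
  rw [tokenize, phiK, phiK, List.take_of_length_le hk, List.take_length]

theorem phiK_nil (D : Dict α) (k : ℕ) : phiK D k [] = [] :=
  applyRules_eq_self_of_length_le_one _ (Nat.zero_le 1)

theorem flatten_phiK (D : Dict α) (k : ℕ) (s : List α) : (phiK D k s).flatten = s := by
  rw [phiK_eq_applyRules, flatten_applyRules, phi0, ← List.flatMap_def, List.flatMap_singleton']

theorem exists_append_of_phiK_eq_append {D : Dict α} {k : ℕ} {s : List α} {P S : List (Token α)}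
    (h : phiK D k s = P ++ S) : ∃ u v, s = u ++ v ∧ phiK D k u = P ∧ phiK D k v = S := by
  obtain ⟨A, B, hAB, hA, hB⟩ := exists_append_of_applyRules_eq_append h
  obtain ⟨u, v, rfl, rfl, rfl⟩ := List.map_eq_append_iff.mp hAB
  exact ⟨u, v, rfl, hA, hB⟩

theorem phiK_eq_singleton_of_mem {D : Dict α} {k : ℕ} {s : List α} {t : Token α}
    (ht : t ∈ phiK D k s) : phiK D k t = [t] := by
  obtain ⟨P, S, hPS⟩ := List.append_of_mem ht
  obtain ⟨-, v, -, -, hv⟩ := exists_append_of_phiK_eq_append hPS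
  obtain ⟨w, -, -, hw, -⟩ := exists_append_of_phiK_eq_append (P := [t]) hv
  have hwt : t = w := by simpa only [hw, List.flatten_singleton] using flatten_phiK D k w
  rwa [← hwt] at hw

theorem phiK_eq_singleton_of_le {D : Dict α} {j k : ℕ} {s : List α} {t : Token α} (hjk : j ≤ k)
    (h : phiK D j s = [t]) : phiK D k s = [t] := by
  obtain ⟨i, rfl⟩ := Nat.exists_eq_add_of_le hjk
  rw [phiK_add, h, applyRules_eq_self_of_length_le_one _ le_rfl]

theorem isCanonical_of_phiK_eq_singleton {D : Dict α} {k : ℕ} {t : Token α}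
    (h : phiK D k t = [t]) : IsCanonical D t := by
  rw [IsCanonical, ← phiK_of_length_le D (le_max_right k D.length)]
  exact phiK_eq_singleton_of_le (le_max_left k D.length) h

theorem IsCanonical.ne_nil {D : Dict α} {t : Token α} (ht : IsCanonical D t) : t ≠ [] := by
  rintro rfl
  exact List.cons_ne_nil _ _ (ht.symm.trans (phiK_nil D D.length))

theorem phiK_zero_ne_singleton (D : Dict α) {t : Token α} (ht : 1 < t.length) :
    phiK D 0 t ≠ [t] := by
  intro h
  have hlength : t.length = 1 := by
    simpa only [phiK_zero, phi0, List.length_map, List.length_singleton]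
      using congrArg List.length h
  omega

theorem IsCanonical.exists_isCanonicalRuleIdx {D : Dict α} {t : Token α} (ht : IsCanonical D t)
    (hlen : 1 < t.length) : ∃ j, IsCanonicalRuleIdx D t j := by
  obtain ⟨j, hj, hj'⟩ := Nat.exists_not_and_succ_of_not_zero_of_exists
    (p := fun k => phiK D k t = [t]) (phiK_zero_ne_singleton D hlen) ⟨D.length, ht⟩
  have hjD : j < D.length := by
    by_contra! hDj
    exact hj ((phiK_of_length_le D hDj t).trans ht)
  exact ⟨j, hjD, length_eq_two_of_applyRule_eq_singleton (phiK_succ D hjD t ▸ hj') hj, hj'⟩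

theorem IsCanonical.isCanonicalRuleIdx_canonIdx {D : Dict α} {t : Token α} (ht : IsCanonical D t)
    (hlen : 1 < t.length) : IsCanonicalRuleIdx D t (canonIdx D t) := by
  have hexists := ht.exists_isCanonicalRuleIdx hlen
  rw [canonIdx, dif_pos hexists]
  exact hexists.choose_spec

theorem IsCanonicalRuleIdx.lt_of_phiK_eq_singleton {D : Dict α} {t : Token α} {j k : ℕ}
    (hj : IsCanonicalRuleIdx D t j) (hk : phiK D k t = [t]) : j < k := by
  by_contra! hkj
  have hlength : (phiK D j t).length = 2 := hj.2.1
  rw [phiK_eq_singleton_of_le hkj hk, List.length_singleton] at hlength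
  omega

theorem suc_mem_phiK_canonIdx (D : Dict α) {t : Token α} (ht : t ≠ []) :
    suc D t ∈ phiK D (canonIdx D t) t := by
  have hne : phiK D (canonIdx D t) t ≠ [] := by
    intro hnil
    exact ht (by rw [← flatten_phiK D (canonIdx D t) t, hnil, List.flatten_nil])
  rw [suc, List.getLastD_eq_getLast?, List.getLast?_eq_some_getLast hne]
  exact List.getLast_mem hne

theorem phiK_canonIdx_suc (D : Dict α) {t : Token α} (ht : t ≠ []) :
    phiK D (canonIdx D t) (suc D t) = [suc D t] :=
  phiK_eq_singleton_of_mem (suc_mem_phiK_canonIdx D ht)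

theorem length_suc_le (D : Dict α) {t : Token α} (ht : t ≠ []) :
    (suc D t).length ≤ t.length := by
  have hsub := List.sublist_flatten_of_mem (suc_mem_phiK_canonIdx D ht)
  rw [flatten_phiK] at hsub
  exact hsub.length_le

theorem isCanonical_suc {D : Dict α} {t : Token α} (ht : IsCanonical D t) :
    IsCanonical D (suc D t) :=
  isCanonical_of_phiK_eq_singleton (phiK_canonIdx_suc D ht.ne_nil)

theorem isCanonical_iterate_suc {D : Dict α} {t : Token α} (ht : IsCanonical D t) (n : ℕ) :
    IsCanonical D ((suc D)^[n] t) := by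
  induction n with
  | zero => exact ht
  | succ n ih =>
    rw [Function.iterate_succ_apply']
    exact isCanonical_suc ih

theorem canonIdx_suc_lt {D : Dict α} {t : Token α} (ht : IsCanonical D t)
    (hlen : 1 < (suc D t).length) : canonIdx D (suc D t) < canonIdx D t :=
  ((isCanonical_suc ht).isCanonicalRuleIdx_canonIdx hlen).lt_of_phiK_eq_singleton
    (phiK_canonIdx_suc D ht.ne_nil)

theorem canonIdx_iterate_suc_lt {D : Dict α} {t : Token α} {n : ℕ} (ht : IsCanonical D t)
    (hn : 1 ≤ n) (hlen : 1 < ((suc D)^[n] t).length) :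
    canonIdx D ((suc D)^[n] t) < canonIdx D t := by
  induction n, hn using Nat.le_induction with
  | base => exact canonIdx_suc_lt ht hlen
  | succ n _ ih =>
    rw [Function.iterate_succ_apply'] at hlen ⊢
    have hcanonical := isCanonical_iterate_suc ht n
    calc canonIdx D (suc D ((suc D)^[n] t))
        < canonIdx D ((suc D)^[n] t) := canonIdx_suc_lt hcanonical hlen
      _ < canonIdx D t := ih (hlen.trans_le (length_suc_le D hcanonical.ne_nil))

theorem priority_monotonicity_general (D : Dict α) (x y : Token α) (hy : IsCanonical D y)
    (hpath : InPath D y x) (hne : x ≠ y) (hxl : 1 < x.length) :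
    canonIdx D x < canonIdx D y := by
  obtain ⟨n, rfl⟩ := hpath
  have hn : n ≠ 0 := by
    rintro rfl
    exact hne rfl
  exact canonIdx_iterate_suc_lt hy (Nat.one_le_iff_ne_zero.mpr hn) hxl

/-- **Priority monotonicity along successor paths.** If `x` and `y` are canonical,
`x ∈ P(y)`, `x ≠ y`, and `x` is non-atomic, then the canonical rule of `x` has
strictly higher priority (strictly smaller index) than the canonical rule of `y`. -/
theorem priority_monotonicity [Fintype α] (D : Dict α) (hD : ValidDict D)
    (x y : Token α) (hx : IsCanonical D x) (hy : IsCanonical D y)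
    (hpath : InPath D y x) (hne : x ≠ y) (hxl : 1 < x.length) :
    canonIdx D x < canonIdx D y :=
  priority_monotonicity_general D x y hy hpath hne hxl

end BPE
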